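/- Let ℓ ≥ 2 and i ≥ ℓ(ℓ-1)+1 be integers, let r > 0 and X > 0 be real numbers, let α ∈ ℂ with |α| < r, and let β ∈ ℂ be arbitrary. Then (1/(2πi)) ∮_{|s|=r} X^s (β+s)^ℓ (α+s)^{-(ℓ-1)} s^{-(i+1-ℓ(ℓ-1))} ds = (1/((ℓ-2)!·(i-ℓ(ℓ-1))!)) · (d^ℓ/dx^ℓ)[ (x + log X)^{ℓ-1+i-ℓ(ℓ-1)} ∫_0^1 u^{ℓ-2} (1-u)^{i-ℓ(ℓ-1)} e^{x(β-αu)} X^{-αu} du ] evaluated at x = 0. -/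

import Mathlib

open Filter intervalIntegral

/-!
The factor `(β + s) ^ ℓ` is the `ℓ`-th `x`-derivative of `exp (x * (β + s))` at `x = 0`, and the
differentiation may be taken outside the contour integral. Feynman's parametrization writes the
two-pole kernel `1 / ((s - z) ^ (a + 1) * (s - w) ^ (b + 1))` as a weighted average over
`u ∈ [0, 1]` of `1 / (s - (u * z + (1 - u) * w)) ^ (a + b + 2)`, which has a single pole on the
segment from `w` to `z`. By Cauchy's formula, this pole contributes the derivative of order
`a + b + 1` of `exp (x * (β + s)) * X ^ s`, that is, `(x + log X) ^ (a + b + 1)` times the function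
itself.
-/

open MeasureTheory Metric Set Function Topology
open scoped Real Interval

section CircleIntegral

variable {E : Type*} [NormedAddCommGroup E] [NormedSpace ℂ E] {c : ℂ} {R : ℝ}

lemma circleIntegral_intervalIntegral_swap {F : ℂ → ℝ → E} {a b : ℝ}
    (hF : ContinuousOn (uncurry F) (sphere c |R| ×ˢ [[a, b]])) :
    (∮ s in C(c, R), ∫ u in a..b, F s u) = ∫ u in a..b, ∮ s in C(c, R), F s u := by
  simp only [circleIntegral, ← intervalIntegral.integral_smul]
  refine intervalIntegral_intervalIntegral_swap (IntegrableOn.mono_set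
    (t := [[0, 2 * π]] ×ˢ [[a, b]]) ?_ (prod_mono uIoc_subset_uIcc uIoc_subset_uIcc))
  refine ContinuousOn.integrableOn_compact (isCompact_uIcc.prod isCompact_uIcc) ?_
  have hcircle : Continuous fun p : ℝ × ℝ => (circleMap c R p.1, p.2) := by fun_prop
  have hderiv : Continuous fun p : ℝ × ℝ => deriv (circleMap c R) p.1 := by
    simp only [deriv_circleMap]; fun_prop
  exact hderiv.continuousOn.smul
    (hF.comp hcircle.continuousOn fun p hp => ⟨circleMap_mem_sphere' c R p.1, hp.2⟩)

lemma hasDerivAt_circleIntegral {F F' : ℂ → ℂ → E} {U : Set ℂ} {x : ℂ} (hU : U ∈ 𝓝 x)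
    (hF : ∀ y ∈ U, ContinuousOn (F y) (sphere c |R|))
    (hF' : ContinuousOn (uncurry F') (U ×ˢ sphere c |R|))
    (hderiv : ∀ y ∈ U, ∀ s ∈ sphere c |R|, HasDerivAt (F · s) (F' y s) y) :
    HasDerivAt (fun y => ∮ s in C(c, R), F y s) (∮ s in C(c, R), F' x s) x := by
  obtain ⟨ε, hε, hεU⟩ := nhds_basis_closedBall.mem_iff.1 hU
  obtain ⟨B, hB⟩ := ((isCompact_closedBall x ε).prod
    (isCompact_sphere c |R|)).exists_bound_of_continuousOn (hF'.mono (prod_mono_left hεU))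
  have hmem (θ : ℝ) : circleMap c R θ ∈ sphere c |R| := circleMap_mem_sphere' c R θ
  have hcont {g : ℂ → E} (hg : ContinuousOn g (sphere c |R|)) :
      Continuous fun θ => deriv (circleMap c R) θ • g (circleMap c R θ) := by
    simp only [deriv_circleMap]
    exact Continuous.smul (by fun_prop) (hg.comp_continuous (by fun_prop) hmem)
  refine (intervalIntegral.hasDerivAt_integral_of_dominated_loc_of_deriv_le
    (F := fun y θ => deriv (circleMap c R) θ • F y (circleMap c R θ))
    (F' := fun y θ => deriv (circleMap c R) θ • F' y (circleMap c R θ))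
    (bound := fun _ => |R| * B) (closedBall_mem_nhds x hε) ?_ ?_ ?_ ?_ ?_ ?_).2
  · filter_upwards [hU] with y hy using (hcont (hF y hy)).aestronglyMeasurable
  · exact (hcont (hF x (mem_of_mem_nhds hU))).intervalIntegrable _ _
  · exact (hcont (hF'.uncurry_left x (mem_of_mem_nhds hU))).aestronglyMeasurable
  · refine Eventually.of_forall fun θ _ y hy => ?_
    rw [norm_smul, deriv_circleMap, norm_mul, norm_circleMap_zero, Complex.norm_I, mul_one]
    gcongr
    exact hB (y, circleMap c R θ) ⟨hy, hmem θ⟩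
  · exact intervalIntegrable_const
  · exact Eventually.of_forall fun θ _ y hy => (hderiv y (hεU hy) _ (hmem θ)).const_smul _

lemma iteratedDeriv_circleIntegral_cexp_smul {φ : ℂ → ℂ} {g : ℂ → E}
    (hφ : ContinuousOn φ (sphere c |R|)) (hg : ContinuousOn g (sphere c |R|)) (n : ℕ) :
    iteratedDeriv n (fun x => ∮ s in C(c, R), Complex.exp (x * φ s) • g s)
      = fun x => ∮ s in C(c, R), (φ s ^ n * Complex.exp (x * φ s)) • g s := by
  induction n with
  | zero => simp
  | succ n ih =>
    rw [iteratedDeriv_succ, ih]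
    ext x
    refine (hasDerivAt_circleIntegral (F := fun y s => (φ s ^ n * Complex.exp (y * φ s)) • g s)
      (F' := fun y s => (φ s ^ (n + 1) * Complex.exp (y * φ s)) • g s)
      univ_mem (fun y _ => by fun_prop) ?_ fun y _ s _ => ?_).deriv
    · have hφ' : ContinuousOn (fun p : ℂ × ℂ => φ p.2) (univ ×ˢ sphere c |R|) :=
        hφ.comp continuousOn_snd fun p hp => hp.2
      have hg' : ContinuousOn (fun p : ℂ × ℂ => g p.2) (univ ×ˢ sphere c |R|) :=
        hg.comp continuousOn_snd fun p hp => hp.2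
      exact ((hφ'.pow (n + 1)).mul (continuousOn_fst.mul hφ').cexp).smul hg'
    · refine HasDerivAt.smul_const ?_ (g s)
      refine ((((hasDerivAt_id y).mul_const (φ s)).cexp).const_mul (φ s ^ n)).congr_deriv ?_
      simp only [id_eq]; ring

lemma hasDerivAt_circleIntegral_one_div_sub_pow_smul {f : ℂ → E} {w : ℂ}
    (hf : ContinuousOn f (sphere c R)) (hw : w ∈ ball c R) (n : ℕ) :
    HasDerivAt (fun w => ∮ s in C(c, R), (1 / (s - w) ^ n) • f s)
      ((n : ℂ) • ∮ s in C(c, R), (1 / (s - w) ^ (n + 1)) • f s) w := by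
  rw [← abs_of_pos (pos_of_mem_ball hw)] at hf hw
  have hsub : ∀ y ∈ ball c |R|, ∀ s ∈ sphere c |R|, s - y ≠ 0 := fun y hy s hs =>
    sub_ne_zero.2 (sphere_disjoint_ball.ne_of_mem hs hy)
  rw [← circleIntegral.integral_smul]
  refine hasDerivAt_circleIntegral (F' := fun y s => (n : ℂ) • (1 / (s - y) ^ (n + 1)) • f s)
    (isOpen_ball.mem_nhds hw) (fun y hy => ?_) ?_ fun y hy s hs => ?_
  · exact (continuousOn_const.div (by fun_prop) fun s hs => pow_ne_zero _ (hsub y hy s hs)).smul hf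
  · exact ((continuousOn_const.div (by fun_prop) fun p hp =>
      pow_ne_zero _ (hsub p.1 hp.1 p.2 hp.2)).smul
        (hf.comp continuousOn_snd fun p hp => hp.2)).const_smul _
  · rw [smul_smul]
    have hs_sub := hsub y hy s hs
    refine HasDerivAt.smul_const ?_ (f s)
    refine ((hasDerivAt_const y (1 : ℂ)).fun_div (((hasDerivAt_id y).const_sub s).fun_pow n)
      (pow_ne_zero _ hs_sub)).congr_deriv ?_
    rcases n with _ | n
    · simp
    · simp only [id_eq, Nat.add_sub_cancel]
      field_simp
      ring

lemma circleIntegral_one_div_sub_pow_smul [CompleteSpace E] {f : ℂ → E} {w : ℂ}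
    (hf : DiffContOnCl ℂ f (ball c R)) (hw : w ∈ ball c R) (n : ℕ) :
    (∮ s in C(c, R), (1 / (s - w) ^ (n + 1)) • f s)
      = (2 * π * Complex.I / n.factorial) • iteratedDeriv n f w := by
  induction n generalizing w with
  | zero => simpa using hf.circleIntegral_sub_inv_smul hw
  | succ n ih =>
    have hloc : (fun w => ∮ s in C(c, R), (1 / (s - w) ^ (n + 1)) • f s)
        =ᶠ[𝓝 w] (2 * π * Complex.I / n.factorial : ℂ) • iteratedDeriv n f :=
      eventually_of_mem (isOpen_ball.mem_nhds hw) fun y hy => ih hy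
    have hderiv := (hasDerivAt_circleIntegral_one_div_sub_pow_smul
      (hf.continuousOn_ball.mono sphere_subset_closedBall) hw (n + 1)).deriv
    rw [hloc.deriv_eq, deriv_const_smul_field, ← iteratedDeriv_succ] at hderiv
    have hn : ((n + 1 : ℕ) : ℂ) ≠ 0 := Nat.cast_ne_zero.2 n.succ_ne_zero
    rw [← inv_smul_smul₀ hn (∮ s in C(c, R), (1 / (s - w) ^ (n + 1 + 1)) • f s), ← hderiv,
      smul_smul, Nat.factorial_succ, Nat.cast_mul]
    congr 1
    field_simp

end CircleIntegral

section Feynman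

lemma integral_deriv_smul_comp_eq_of_endpoints {E : Type*} [NormedAddCommGroup E]
    [NormedSpace ℂ E] [CompleteSpace E] {f : ℂ → E} {γ γ' : ℝ → ℂ} {a b c d : ℝ}
    (hf : Differentiable ℂ f) (hγ : ∀ u ∈ [[a, b]], HasDerivAt γ (γ' u) u)
    (hγ' : ContinuousOn γ' [[a, b]]) (ha : γ a = c) (hb : γ b = d) :
    (∫ u in a..b, γ' u • f (γ u)) = ∫ t in c..d, f t := by
  obtain ⟨g, hg⟩ := hf.isExactOn_univ
  have hγ_cont : ContinuousOn γ [[a, b]] := HasDerivAt.continuousOn hγ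
  rw [integral_eq_sub_of_hasDerivAt (f := g ∘ γ)
      (fun u hu => (hg (γ u) (mem_univ _)).scomp u (hγ u hu))
      (hγ'.smul (hf.continuous.comp_continuousOn hγ_cont)).intervalIntegrable,
    integral_eq_sub_of_hasDerivAt (f := fun t : ℝ => g t) (f' := fun t : ℝ => f t)
      (fun t _ => by
        simpa [comp_def] using (hg t (mem_univ _)).scomp t (hasDerivAt_id t).ofReal_comp)
      ((hf.continuous.comp Complex.continuous_ofReal).intervalIntegrable c d),
    comp_apply, comp_apply, ha, hb]

lemma integral_pow_mul_one_sub_pow (a b : ℕ) :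
    (∫ u in (0 : ℝ)..1, (u : ℂ) ^ a * (1 - (u : ℂ)) ^ b)
      = a.factorial * b.factorial / (a + b + 1).factorial := by
  have hbeta := Complex.betaIntegral_eq_Gamma_mul_div (a + 1) (b + 1)
    (by norm_cast; positivity) (by norm_cast; positivity)
  rw [Complex.Gamma_nat_eq_factorial, Complex.Gamma_nat_eq_factorial,
    show (a + 1 + (b + 1) : ℂ) = ((a + b + 1 : ℕ) : ℂ) + 1 by push_cast; ring,
    Complex.Gamma_nat_eq_factorial] at hbeta
  simpa [Complex.betaIntegral] using hbeta

lemma one_div_pow_mul_pow_eq_integral {z w : ℂ}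
    (h : ∀ u ∈ [[(0 : ℝ), 1]], u * z + (1 - u) * w ≠ 0) (a b : ℕ) :
    1 / (z ^ (a + 1) * w ^ (b + 1))
      = (a + b + 1).factorial / (a.factorial * b.factorial) * ∫ u in (0 : ℝ)..1,
          (u : ℂ) ^ a * (1 - (u : ℂ)) ^ b * (1 / (u * z + (1 - u) * w) ^ (a + b + 2)) := by
  have hw : w ≠ 0 := by simpa using h 0 left_mem_uIcc
  have hz : z ≠ 0 := by simpa using h 1 right_mem_uIcc
  have hcast (u : ℝ) : HasDerivAt (fun u : ℝ => (u : ℂ)) 1 u := (hasDerivAt_id u).ofReal_comp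
  have hγ : ∀ u ∈ [[(0 : ℝ), 1]], HasDerivAt (fun u : ℝ => u * z / (u * z + (1 - u) * w))
      (z * w / (u * z + (1 - u) * w) ^ 2) u := fun u hu =>
    (((hcast u).mul_const z).fun_div
      (((hcast u).mul_const z).fun_add (((hcast u).const_sub 1).mul_const w))
      (h u hu)).congr_deriv (by ring)
  -- `u * z / (u * z + (1 - u) * w)` runs from `0` to `1`, so by path independence of the integral
  -- of `t ^ a * (1 - t) ^ b` its pullback along this path is a Beta integral.
  have hpath := integral_deriv_smul_comp_eq_of_endpoints (c := 0) (d := 1)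
    (f := fun t => t ^ a * (1 - t) ^ b) (by fun_prop) hγ
    (continuousOn_const.div (by fun_prop) fun u hu => pow_ne_zero 2 (h u hu))
    (by simp) (by simp [hz])
  have hpull : ∀ u ∈ [[(0 : ℝ), 1]],
      (z * w / (u * z + (1 - u) * w) ^ 2) • ((u * z / (u * z + (1 - u) * w)) ^ a
          * (1 - u * z / (u * z + (1 - u) * w)) ^ b)
        = z ^ (a + 1) * w ^ (b + 1)
          * (u ^ a * (1 - u) ^ b * (1 / (u * z + (1 - u) * w) ^ (a + b + 2))) := fun u hu => by
    have hu0 := h u hu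
    rw [one_sub_div hu0, add_sub_cancel_left, smul_eq_mul, div_pow, div_pow, mul_pow, mul_pow]
    field_simp
    ring
  rw [integral_congr hpull, intervalIntegral.integral_const_mul,
    integral_pow_mul_one_sub_pow] at hpath
  have ha : (a.factorial : ℂ) ≠ 0 := Nat.cast_ne_zero.2 a.factorial_ne_zero
  have hb : (b.factorial : ℂ) ≠ 0 := Nat.cast_ne_zero.2 b.factorial_ne_zero
  have hab : ((a + b + 1).factorial : ℂ) ≠ 0 := Nat.cast_ne_zero.2 (Nat.factorial_ne_zero _)
  rw [← mul_right_inj' (mul_ne_zero (pow_ne_zero (a + 1) hz) (pow_ne_zero (b + 1) hw)),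
    mul_left_comm, hpath]
  field_simp

end Feynman

section HermiteGenocchi

variable {E : Type*} [NormedAddCommGroup E] [NormedSpace ℂ E] [CompleteSpace E] {f : ℂ → E}
  {c z w : ℂ} {R : ℝ}

lemma convexComb_mem_ball (hz : z ∈ ball c R) (hw : w ∈ ball c R) {u : ℝ}
    (hu : u ∈ [[(0 : ℝ), 1]]) : u * z + (1 - u) * w ∈ ball c R := by
  rw [uIcc_of_le zero_le_one] at hu
  simpa using convex_ball c R hz hw hu.1 (sub_nonneg.2 hu.2) (add_sub_cancel u 1)

lemma circleIntegral_one_div_sub_pow_mul_sub_pow_smul_eq_integral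
    (hf : ContinuousOn f (sphere c R)) (hz : z ∈ ball c R) (hw : w ∈ ball c R) (a b : ℕ) :
    (∮ s in C(c, R), (1 / ((s - z) ^ (a + 1) * (s - w) ^ (b + 1))) • f s)
      = ((a + b + 1).factorial / (a.factorial * b.factorial) : ℂ) • ∫ u in (0 : ℝ)..1,
          ((u : ℂ) ^ a * (1 - (u : ℂ)) ^ b) • ∮ s in C(c, R),
            (1 / (s - (u * z + (1 - u) * w)) ^ (a + b + 2)) • f s := by
  have hR : 0 < R := pos_of_mem_ball hz
  have hne : ∀ s ∈ sphere c R, ∀ u ∈ [[(0 : ℝ), 1]], s - (u * z + (1 - u) * w) ≠ 0 :=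
    fun s hs u hu => sub_ne_zero.2 (sphere_disjoint_ball.ne_of_mem hs
      (convexComb_mem_ball hz hw hu))
  have hfeynman : ∀ s ∈ sphere c R, (1 / ((s - z) ^ (a + 1) * (s - w) ^ (b + 1))) • f s
      = ((a + b + 1).factorial / (a.factorial * b.factorial) : ℂ) • ∫ u in (0 : ℝ)..1,
        ((u : ℂ) ^ a * (1 - (u : ℂ)) ^ b)
          • (1 / (s - (u * z + (1 - u) * w)) ^ (a + b + 2)) • f s := fun s hs => by
    have hcomb (u : ℝ) : u * (s - z) + (1 - u) * (s - w) = s - (u * z + (1 - u) * w) := by ring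
    rw [one_div_pow_mul_pow_eq_integral fun u hu => hcomb u ▸ hne s hs u hu, mul_smul,
      ← intervalIntegral.integral_smul_const]
    simp only [hcomb, smul_smul]
  have hcont : ContinuousOn (uncurry fun (s : ℂ) (u : ℝ) => ((u : ℂ) ^ a * (1 - (u : ℂ)) ^ b)
      • (1 / (s - (u * z + (1 - u) * w)) ^ (a + b + 2)) • f s) (sphere c |R| ×ˢ [[0, 1]]) := by
    rw [abs_of_pos hR]
    exact ContinuousOn.smul (by fun_prop) ((continuousOn_const.div (by fun_prop) fun p hp =>
      pow_ne_zero _ (hne p.1 hp.1 p.2 hp.2)).smul (hf.comp continuousOn_fst fun p hp => hp.1))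
  rw [circleIntegral.integral_congr hR.le hfeynman, circleIntegral.integral_smul,
    circleIntegral_intervalIntegral_swap hcont]
  simp only [circleIntegral.integral_smul]

/-- A contour form of the Hermite–Genocchi formula: the left-hand side is `2 * π * I` times the
divided difference of `f` at the nodes `z` (`a + 1` times) and `w` (`b + 1` times). -/
lemma circleIntegral_one_div_sub_pow_mul_sub_pow_smul (hf : DiffContOnCl ℂ f (ball c R))
    (hz : z ∈ ball c R) (hw : w ∈ ball c R) (a b : ℕ) :
    (∮ s in C(c, R), (1 / ((s - z) ^ (a + 1) * (s - w) ^ (b + 1))) • f s)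
      = (2 * π * Complex.I / (a.factorial * b.factorial)) • ∫ u in (0 : ℝ)..1,
          ((u : ℂ) ^ a * (1 - (u : ℂ)) ^ b)
            • iteratedDeriv (a + b + 1) f (u * z + (1 - u) * w) := by
  have hab : ((a + b + 1).factorial : ℂ) ≠ 0 := Nat.cast_ne_zero.2 (Nat.factorial_ne_zero _)
  rw [circleIntegral_one_div_sub_pow_mul_sub_pow_smul_eq_integral
      (hf.continuousOn_ball.mono sphere_subset_closedBall) hz hw a b,
    integral_congr fun u hu => congrArg _
      (circleIntegral_one_div_sub_pow_smul hf (convexComb_mem_ball hz hw hu) (a + b + 1))]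
  simp_rw [smul_comm _ (2 * π * Complex.I / (a + b + 1).factorial : ℂ)]
  rw [intervalIntegral.integral_smul, smul_smul]
  congr 1
  field_simp

end HermiteGenocchi

section Exponential

variable {c z w : ℂ} {R : ℝ}

lemma iteratedDeriv_cexp_mul_add_mul_cexp_mul (x β L : ℂ) (n : ℕ) :
    iteratedDeriv n (fun s => Complex.exp (x * (β + s)) * Complex.exp (s * L))
      = fun s => (x + L) ^ n * (Complex.exp (x * (β + s)) * Complex.exp (s * L)) := by
  have hexp (s : ℂ) : Complex.exp (x * (β + s)) * Complex.exp (s * L)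
      = Complex.exp (x * β) * Complex.exp ((x + L) * s) := by
    rw [← Complex.exp_add, ← Complex.exp_add]
    congr 1
    ring
  ext s
  simp only [hexp, iteratedDeriv_const_mul_field, iteratedDeriv_cexp_const_mul]
  ring

lemma circleIntegral_cexp_smul_cexp_div_sub_pow_mul_sub_pow (hz : z ∈ ball c R)
    (hw : w ∈ ball c R) (x β L : ℂ) (a b : ℕ) :
    (∮ s in C(c, R), Complex.exp (x * (β + s))
        • (Complex.exp (s * L) / ((s - z) ^ (a + 1) * (s - w) ^ (b + 1))))
      = 2 * π * Complex.I / (a.factorial * b.factorial) * ((x + L) ^ (a + b + 1)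
          * ∫ u in (0 : ℝ)..1, (u : ℂ) ^ a * (1 - (u : ℂ)) ^ b
            * Complex.exp (x * (β + (u * z + (1 - u) * w)))
            * Complex.exp ((u * z + (1 - u) * w) * L)) := by
  have hgenocchi := circleIntegral_one_div_sub_pow_mul_sub_pow_smul
    (f := fun s => Complex.exp (x * (β + s)) * Complex.exp (s * L))
    (Differentiable.diffContOnCl (by fun_prop)) hz hw a b
  simp only [iteratedDeriv_cexp_mul_add_mul_cexp_mul, smul_eq_mul] at hgenocchi ⊢
  rw [← intervalIntegral.integral_const_mul]
  calc (∮ s in C(c, R), Complex.exp (x * (β + s))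
        * (Complex.exp (s * L) / ((s - z) ^ (a + 1) * (s - w) ^ (b + 1))))
      = ∮ s in C(c, R), 1 / ((s - z) ^ (a + 1) * (s - w) ^ (b + 1))
        * (Complex.exp (x * (β + s)) * Complex.exp (s * L)) := by
        congr 1; ext s; ring
    _ = _ := by
        rw [hgenocchi]
        congr 2; ext u; ring

theorem circleIntegral_shifted_pow_eq_iteratedDeriv_general (hz : z ∈ ball c R)
    (hw : w ∈ ball c R) (β L : ℂ) (k a b : ℕ) :
    (1 / (2 * (π : ℂ) * Complex.I)) * (∮ s in C(c, R),
        Complex.exp (s * L) * (β + s) ^ k / ((s - z) ^ (a + 1) * (s - w) ^ (b + 1)))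
      = 1 / (a.factorial * b.factorial) * iteratedDeriv k (fun x : ℂ =>
          (x + L) ^ (a + b + 1) * ∫ u in (0 : ℝ)..1, (u : ℂ) ^ a * (1 - (u : ℂ)) ^ b
            * Complex.exp (x * (β + (u * z + (1 - u) * w)))
            * Complex.exp ((u * z + (1 - u) * w) * L)) 0 := by
  have hsphere : ∀ v ∈ ball c R, ∀ s ∈ sphere c |R|, s - v ≠ 0 := fun v hv s hs => by
    rw [abs_of_pos (pos_of_mem_ball hv)] at hs
    exact sub_ne_zero.2 (sphere_disjoint_ball.ne_of_mem hs hv)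
  have hcont : ContinuousOn (fun s => Complex.exp (s * L) / ((s - z) ^ (a + 1) * (s - w) ^ (b + 1)))
      (sphere c |R|) := ContinuousOn.div (by fun_prop) (by fun_prop) fun s hs =>
    mul_ne_zero (pow_ne_zero _ (hsphere z hz s hs)) (pow_ne_zero _ (hsphere w hw s hs))
  have hderiv := congrFun (iteratedDeriv_circleIntegral_cexp_smul (φ := fun s => β + s)
    (by fun_prop) hcont k) 0
  simp_rw [circleIntegral_cexp_smul_cexp_div_sub_pow_mul_sub_pow hz hw,
    iteratedDeriv_const_mul_field, zero_mul, Complex.exp_zero, mul_one, smul_eq_mul] at hderiv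
  simp_rw [mul_comm (Complex.exp _) ((β + _) ^ k), mul_div_assoc]
  rw [← hderiv, ← mul_assoc]
  congr 1
  field_simp

end Exponential

/-- For integers `ℓ ≥ 2`, `i ≥ ℓ(ℓ-1)+1`, reals `r, X > 0`, `α ∈ ℂ` with
`|α| < r` and arbitrary `β ∈ ℂ`:
`(1/(2πi)) ∮_{|s|=r} X^s (β+s)^ℓ (α+s)^{-(ℓ-1)} s^{-(i+1-ℓ(ℓ-1))} ds
  = (1/((ℓ-2)!·(i-ℓ(ℓ-1))!)) · d^ℓ/dx^ℓ [ (x+log X)^{ℓ-1+i-ℓ(ℓ-1)}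
      ∫₀¹ u^{ℓ-2}(1-u)^{i-ℓ(ℓ-1)} e^{x(β-αu)} X^{-αu} du ] |_{x=0}`. -/
theorem circleIntegral_shifted_pow_eq_iteratedDeriv
    (ℓ i : ℕ) (hℓ : 2 ≤ ℓ) (hi : ℓ * (ℓ - 1) + 1 ≤ i) (r X : ℝ) (hr : 0 < r) (hX : 0 < X)
    (α β : ℂ) (hα : ‖α‖ < r) :
    (1 / (2 * (Real.pi : ℂ) * Complex.I)) *
        (∮ s in C(0, r),
          Complex.exp (s * Real.log X) * (β + s) ^ ℓ
            / ((α + s) ^ (ℓ - 1) * s ^ ((i - ℓ * (ℓ - 1)) + 1)))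
      = ((1 / ((Nat.factorial (ℓ - 2) : ℝ) * (Nat.factorial (i - ℓ * (ℓ - 1)) : ℝ)) : ℝ) : ℂ)
          * iteratedDeriv ℓ
              (fun x : ℂ =>
                (x + (Real.log X : ℂ)) ^ (ℓ - 1 + (i - ℓ * (ℓ - 1)))
                  * ∫ u in (0:ℝ)..1,
                      ((u ^ (ℓ - 2) * (1 - u) ^ (i - ℓ * (ℓ - 1)) : ℝ) : ℂ)
                        * Complex.exp (x * (β - α * u))
                        * Complex.exp (-α * u * Real.log X)) 0 := by
  obtain ⟨m, rfl⟩ := Nat.exists_eq_add_of_le' hℓ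
  simpa [add_comm, add_left_comm, add_assoc, mul_comm, mul_left_comm, sub_eq_add_neg] using
    circleIntegral_shifted_pow_eq_iteratedDeriv_general
      (mem_ball_zero_iff.2 ((norm_neg α).trans_lt hα)) (mem_ball_self hr) β (Real.log X)
      (m + 2) m (i - (m + 2) * (m + 2 - 1))
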